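/- arXiv:2403.10757 — 3 statements merged into one kernel-verified Lean document; each statement's English description precedes it below -/
import Mathlib

section
/- Let F = FreeGroup A be a free group, let ι be a finite nonempty index set, and for each i ∈ ι let H_i and K_i be subgroups of F such that H_i is a free factor of K_i. Then the intersection ⋂_{i∈ι} H_i is a free factor of ⋂_{i∈ι} K_i. -/
/-- `H` is a free factor of `K`: `H ≤ K` and `K` is the internal free product of `H`
and some subgroup `L ≤ K`, i.e. the canonical homomorphism `H ∗ L →* K` induced by
the inclusions is bijective. -/
def IsFreeFactor {G : Type*} [Group G] (H K : Subgroup G) : Prop :=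
  ∃ (hHK : H ≤ K) (L : Subgroup G) (hLK : L ≤ K),
    Function.Bijective
      ⇑(Monoid.Coprod.lift (Subgroup.inclusion hHK) (Subgroup.inclusion hLK))

section Helpers

universe u

/-- Existence of a Schreier transversal adapted to the free factor generated by `X`. -/
theorem exists_schreier {B : Type*} (X : Set B) (M : Subgroup (FreeGroup B)) :
    ∃ t : (FreeGroup B ⧸ M) → FreeGroup B,
      t ((1 : FreeGroup B) : FreeGroup B ⧸ M) = 1 ∧
      (∀ s, t s • ((1 : FreeGroup B) : FreeGroup B ⧸ M) = s) ∧
      (∀ h ∈ Subgroup.closure (FreeGroup.of '' X),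
        t (h • ((1 : FreeGroup B) : FreeGroup B ⧸ M)) ∈ Subgroup.closure (FreeGroup.of '' X)) ∧
      (∀ P : (FreeGroup B ⧸ M) → Prop, P ((1 : FreeGroup B) : FreeGroup B ⧸ M) →
        (∀ z s, t (FreeGroup.of z • s) = FreeGroup.of z * t s → (P s ↔ P (FreeGroup.of z • s))) →
        ∀ s, P s) := by
  classical
  set s0 : FreeGroup B ⧸ M := ((1 : FreeGroup B) : FreeGroup B ⧸ M) with hs0
  let cost : List (B × Bool) → ℕ ×ₗ ℕ :=
    fun w => toLex (w.countP (fun p => decide (p.1 ∉ X)), w.length)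
  have ex : ∀ s : FreeGroup B ⧸ M, ∃ w : List (B × Bool), FreeGroup.mk w • s0 = s ∧
      ∀ w', FreeGroup.mk w' • s0 = s → cost w ≤ cost w' := by
    intro s
    have hne : {w : List (B × Bool) | FreeGroup.mk w • s0 = s}.Nonempty := by
      induction s using QuotientGroup.induction_on with
      | H g =>
        refine ⟨g.toWord, ?_⟩
        simp [hs0, FreeGroup.mk_toWord, MulAction.Quotient.smul_mk]
    have wf : WellFounded (fun a b : List (B × Bool) => cost a < cost b) :=
      InvImage.wf cost wellFounded_lt
    refine ⟨wf.min _ hne, wf.min_mem _ hne, fun w' hw' => ?_⟩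
    exact not_lt.1 (wf.not_lt_min _ hw')
  choose w hw hmin using ex
  -- the parent
  have par : ∀ s, s ≠ s0 → ∃ l : B × Bool, ∃ w', w s = l :: w' ∧
      FreeGroup.mk w' • s0 = (FreeGroup.mk [l])⁻¹ • s ∧
      cost (w ((FreeGroup.mk [l])⁻¹ • s)) < cost (w s) ∧
      ((w s).countP (fun p => decide (p.1 ∉ X)) = 0 → l.1 ∈ X ∧
        (w ((FreeGroup.mk [l])⁻¹ • s)).countP (fun p => decide (p.1 ∉ X)) = 0) := by
    intro s hs
    cases hws : w s with
    | nil =>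
      exfalso
      apply hs
      rw [← hw s, hws, ← FreeGroup.one_eq_mk, one_smul]
    | cons l w' =>
      have h1 : FreeGroup.mk w' • s0 = (FreeGroup.mk [l])⁻¹ • s := by
        rw [eq_inv_smul_iff, ← mul_smul, FreeGroup.mul_mk]
        have := hw s
        rw [hws] at this
        simpa using this
      have h2 := hmin _ _ h1
      refine ⟨l, w', rfl, h1, lt_of_le_of_lt h2 ?_, ?_⟩
      · simp only [cost, Prod.Lex.toLex_lt_toLex, List.countP_cons, List.length_cons]
        by_cases hl : l.1 ∈ X <;> simp [hl]
      · intro h0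
        simp only [List.countP_cons] at h0
        simp only [cost, Prod.Lex.toLex_le_toLex] at h2
        by_cases hl : l.1 ∈ X
        · refine ⟨hl, ?_⟩
          omega
        · simp [hl] at h0
  choose l w' hl1 hl2 hl3 hl4 using par
  have wfS : WellFounded (fun a b : FreeGroup B ⧸ M => cost (w a) < cost (w b)) :=
    InvImage.wf (fun a => cost (w a)) wellFounded_lt
  let t : (FreeGroup B ⧸ M) → FreeGroup B := wfS.fix (fun s rec =>
    if h : s = s0 then 1 else
      FreeGroup.mk [l s h] * rec ((FreeGroup.mk [l s h])⁻¹ • s) (hl3 s h))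
  have t0 : t s0 = 1 := by
    simp only [t]; rw [wfS.fix_eq]; simp
  have t1 : ∀ s, ∀ hs : s ≠ s0,
      t s = FreeGroup.mk [l s hs] * t ((FreeGroup.mk [l s hs])⁻¹ • s) := by
    intro s hs
    simp only [t]; rw [wfS.fix_eq]; simp [hs]
  refine ⟨t, t0, ?_, ?_, ?_⟩
  · intro s
    induction s using wfS.induction with
    | h s ih =>
      by_cases hs : s = s0
      · subst hs; rw [t0, one_smul]
      · rw [t1 s hs, mul_smul, ih _ (hl3 s hs), smul_inv_smul]
  · have key : ∀ s, (w s).countP (fun p => decide (p.1 ∉ X)) = 0 →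
        t s ∈ Subgroup.closure (FreeGroup.of '' X) := by
      intro s
      induction s using wfS.induction with
      | h s ih =>
        intro h0
        by_cases hs : s = s0
        · subst hs; rw [t0]; exact one_mem _
        · rw [t1 s hs]
          obtain ⟨h1, h2⟩ := hl4 s hs h0
          refine mul_mem ?_ (ih _ (hl3 s hs) h2)
          generalize l s hs = le at h1
          obtain ⟨b, e⟩ := le
          have hm : FreeGroup.of b ∈ Subgroup.closure (FreeGroup.of '' X) :=
            Subgroup.subset_closure ⟨b, h1, rfl⟩
          cases e
          · have : FreeGroup.mk [(b, false)] = (FreeGroup.of b)⁻¹ := by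
              simp [FreeGroup.of, FreeGroup.inv_mk, FreeGroup.invRev]
            rw [this]; exact inv_mem hm
          · exact hm
    have key2 : ∀ h ∈ Subgroup.closure (FreeGroup.of '' X), ∃ v : List (B × Bool),
        FreeGroup.mk v = h ∧ ∀ p ∈ v, p.1 ∈ X := by
      intro h hh
      induction hh using Subgroup.closure_induction with
      | mem x hx =>
        obtain ⟨b, hb, rfl⟩ := hx
        exact ⟨[(b, true)], rfl, by simpa using hb⟩
      | one => exact ⟨[], rfl, by simp⟩
      | mul x y _ _ hx hy =>
        obtain ⟨v, rfl, hv⟩ := hx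
        obtain ⟨v', rfl, hv'⟩ := hy
        refine ⟨v ++ v', by rw [FreeGroup.mul_mk], ?_⟩
        intro p hp
        rcases List.mem_append.1 hp with hp | hp
        · exact hv p hp
        · exact hv' p hp
      | inv x _ hx =>
        obtain ⟨v, rfl, hv⟩ := hx
        refine ⟨FreeGroup.invRev v, by rw [FreeGroup.inv_mk], ?_⟩
        intro p hp
        simp only [FreeGroup.invRev, List.mem_reverse, List.mem_map] at hp
        obtain ⟨q, hq, rfl⟩ := hp
        exact hv q hq
    intro h hh
    obtain ⟨v, rfl, hv⟩ := key2 h hh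
    apply key
    have h2 := hmin _ v rfl
    simp only [cost, Prod.Lex.toLex_le_toLex] at h2
    have h3 : v.countP (fun p => decide (p.1 ∉ X)) = 0 := by
      rw [List.countP_eq_zero]
      intro p hp
      simpa using hv p hp
    omega
  · intro P P0 hP s
    induction s using wfS.induction with
    | h s ih =>
      by_cases hs : s = s0
      · subst hs; exact P0
      · have h1 := ih _ (hl3 s hs)
        have h2 := t1 s hs
        generalize l s hs = le at h1 h2
        obtain ⟨b, e⟩ := le
        cases e
        · have hb : FreeGroup.mk [(b, false)] = (FreeGroup.of b)⁻¹ := by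
            simp [FreeGroup.of, FreeGroup.inv_mk, FreeGroup.invRev]
          rw [hb, inv_inv] at h1 h2
          exact (hP b s (by rw [h2]; simp)).2 h1
        · have hb : FreeGroup.mk [(b, true)] = FreeGroup.of b := rfl
          rw [hb] at h1 h2
          have := (hP b ((FreeGroup.of b)⁻¹ • s) (by rw [smul_inv_smul]; exact h2)).1 h1
          rwa [smul_inv_smul] at this

/-- Schreier rewriting argument. -/
theorem schreier_mem {B : Type*} {M : Subgroup (FreeGroup B)}
    (t : (FreeGroup B ⧸ M) → FreeGroup B) (W : Set B) (O : Set (FreeGroup B ⧸ M))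
    (N : Subgroup (FreeGroup B))
    (hO : ∀ w ∈ Subgroup.closure (FreeGroup.of '' W), ∀ s ∈ O, w • s ∈ O)
    (hN : ∀ z ∈ W, ∀ s ∈ O, (t (FreeGroup.of z • s))⁻¹ * FreeGroup.of z * t s ∈ N) :
    ∀ w ∈ Subgroup.closure (FreeGroup.of '' W), ∀ s ∈ O, (t (w • s))⁻¹ * w * t s ∈ N := by
  intro w hw
  induction hw using Subgroup.closure_induction with
  | mem x hx =>
    obtain ⟨b, hb, rfl⟩ := hx
    exact hN b hb
  | one => intro s _; simp
  | mul x y hx hy ihx ihy =>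
    intro s hs
    have := mul_mem (ihx _ (hO y hy s hs)) (ihy s hs)
    convert this using 1
    rw [mul_smul]; group
  | inv x hx ihx =>
    intro s hs
    have := inv_mem (ihx _ (hO _ (inv_mem hx) s hs))
    convert this using 1
    rw [smul_inv_smul]; group

theorem kurosh_free {B : Type u} (X : Set B) (M : Subgroup (FreeGroup B)) :
    ∃ (C : Type u) (c : C → FreeGroup B) (Y : Set C),
      Function.Injective (FreeGroup.lift c) ∧ Subgroup.closure (Set.range c) = M ∧
      Subgroup.closure (c '' Y) = Subgroup.closure (FreeGroup.of '' X) ⊓ M := by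
  classical
  obtain ⟨t, t0, t1, tH, tP⟩ := exists_schreier X M
  set s0 : FreeGroup B ⧸ M := ((1 : FreeGroup B) : FreeGroup B ⧸ M) with hs0
  have stab : ∀ g : FreeGroup B, g • s0 = s0 ↔ g ∈ M := by
    intro g
    rw [hs0, MulAction.Quotient.smul_coe, smul_eq_mul, mul_one, eq_comm, QuotientGroup.eq]
    simp
  let gen : B × (FreeGroup B ⧸ M) → FreeGroup B :=
    fun p => (t (FreeGroup.of p.1 • p.2))⁻¹ * FreeGroup.of p.1 * t p.2
  let bad : B → (FreeGroup B ⧸ M) → Prop :=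
    fun z s => t (FreeGroup.of z • s) = FreeGroup.of z * t s
  let C := {p : B × (FreeGroup B ⧸ M) // ¬ bad p.1 p.2}
  let c : C → FreeGroup B := fun p => gen p.1
  let O : Set (FreeGroup B ⧸ M) :=
    {s | ∃ h ∈ Subgroup.closure (FreeGroup.of '' X), h • s0 = s}
  have hO0 : s0 ∈ O := ⟨1, one_mem _, one_smul _ _⟩
  have hOc : ∀ w ∈ Subgroup.closure (FreeGroup.of '' X), ∀ s ∈ O, w • s ∈ O := by
    rintro w hw s ⟨h, hh, rfl⟩
    exact ⟨w * h, mul_mem hw hh, mul_smul _ _ _⟩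
  have hOt : ∀ s ∈ O, t s ∈ Subgroup.closure (FreeGroup.of '' X) := by
    rintro s ⟨h, hh, rfl⟩
    exact tH h hh
  have genbad : ∀ z s, bad z s → gen (z, s) = 1 := by
    intro z s h
    simp only [bad] at h
    simp only [gen, h]; group
  have genM : ∀ p, gen p ∈ M := by
    intro p
    rw [← stab]
    simp only [gen, mul_smul, t1]
    rw [inv_smul_eq_iff, t1]
  refine ⟨C, c, {p | p.1.1 ∈ X ∧ p.1.2 ∈ O}, ?_, ?_, ?_⟩
  · let co : B → (FreeGroup B ⧸ M) → FreeGroup C :=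
      fun z s => if h : bad z s then 1 else FreeGroup.of ⟨(z, s), h⟩
    let e : B → Equiv.Perm ((FreeGroup B ⧸ M) × FreeGroup C) := fun z =>
      { toFun := fun p => (FreeGroup.of z • p.1, co z p.1 * p.2)
        invFun := fun p => ((FreeGroup.of z)⁻¹ • p.1, (co z ((FreeGroup.of z)⁻¹ • p.1))⁻¹ * p.2)
        left_inv := fun p => by simp
        right_inv := fun p => by simp }
    let Φ : FreeGroup B →* Equiv.Perm ((FreeGroup B ⧸ M) × FreeGroup C) := FreeGroup.lift e
    have Φof : ∀ z s g, Φ (FreeGroup.of z) (s, g) = (FreeGroup.of z • s, co z s * g) := by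
      intro z s g
      simp only [Φ, FreeGroup.lift_apply_of]
      rfl
    have Φt : ∀ s g, Φ (t s) (s0, g) = (s, g) := by
      apply tP
      · intro g; rw [t0, map_one]; rfl
      · intro z s h
        have hco : co z s = 1 := by simp only [co]; rw [dif_pos h]
        apply forall_congr'
        intro g
        have := Φof z s g
        rw [hco, one_mul] at this
        rw [h, map_mul, Equiv.Perm.mul_apply, ← this, (Φ (FreeGroup.of z)).injective.eq_iff]
    have Φc : ∀ p : C, ∀ g, Φ (c p) (s0, g) = (s0, FreeGroup.of p * g) := by
      rintro ⟨⟨z, s⟩, h⟩ g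
      simp only [c, gen, map_mul, Equiv.Perm.mul_apply, Φt, Φof, map_inv]
      rw [Equiv.Perm.inv_eq_iff_eq, Φt]
      simp only [co]
      rw [dif_neg h]
    have Φu : ∀ u : FreeGroup C, ∀ g, Φ (FreeGroup.lift c u) (s0, g) = (s0, u * g) := by
      intro u
      induction u using FreeGroup.induction_on with
      | C1 => intro g; simp
      | of x => intro g; rw [FreeGroup.lift_apply_of]; exact Φc x g
      | inv_of x ih =>
        intro g
        rw [map_inv, map_inv, Equiv.Perm.inv_eq_iff_eq, ih]; simp
      | mul x y hx hy =>
        intro g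
        rw [map_mul, map_mul, Equiv.Perm.mul_apply, hy, hx, mul_assoc]
    rw [injective_iff_map_eq_one]
    intro u hu
    have := Φu u 1
    rw [hu, map_one] at this
    simpa using (congrArg Prod.snd this).symm
  · apply le_antisymm
    · rw [Subgroup.closure_le]
      rintro _ ⟨p, rfl⟩
      exact genM p.1
    · intro m hm
      have := schreier_mem t Set.univ Set.univ (Subgroup.closure (Set.range c))
        (fun _ _ _ _ => Set.mem_univ _) ?_ m ?_ s0 (Set.mem_univ _)
      · rw [(stab m).2 hm, t0] at this
        simpa using this
      · intro z _ s _
        change gen (z, s) ∈ _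
        by_cases h : bad z s
        · rw [genbad z s h]; exact one_mem _
        · exact Subgroup.subset_closure ⟨⟨(z, s), h⟩, rfl⟩
      · rw [Set.image_univ, FreeGroup.closure_range_of]; trivial
  · apply le_antisymm
    · rw [Subgroup.closure_le]
      rintro _ ⟨⟨⟨z, s⟩, h⟩, ⟨hz, hs⟩, rfl⟩
      have hzm : FreeGroup.of z ∈ Subgroup.closure (FreeGroup.of '' X) :=
        Subgroup.subset_closure ⟨z, hz, rfl⟩
      exact Subgroup.mem_inf.2 ⟨Subgroup.mul_mem _ (Subgroup.mul_mem _ (Subgroup.inv_mem _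
        (hOt _ (hOc _ hzm _ hs))) hzm) (hOt _ hs), genM _⟩
    · rintro m ⟨hmX, hm⟩
      have := schreier_mem t X O (Subgroup.closure (c '' {p | p.1.1 ∈ X ∧ p.1.2 ∈ O}))
        hOc ?_ m hmX s0 hO0
      · rw [(stab m).2 hm, t0] at this
        simpa using this
      · intro z hz s hs
        change gen (z, s) ∈ _
        by_cases h : bad z s
        · rw [genbad z s h]; exact one_mem _
        · exact Subgroup.subset_closure ⟨⟨(z, s), h⟩, ⟨hz, hs⟩, rfl⟩

/-- Free factor in terms of bases. -/
def BasisFactor {G : Type u} [Group G] (H K : Subgroup G) : Prop :=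
  ∃ (B : Type u) (b : B → G) (X : Set B), Function.Injective (FreeGroup.lift b) ∧
    Subgroup.closure (Set.range b) = K ∧ Subgroup.closure (b '' X) = H

theorem BasisFactor.inf {G : Type u} [Group G] {H K M : Subgroup G} (h : BasisFactor H K)
    (hM : M ≤ K) : BasisFactor (H ⊓ M) M := by
  obtain ⟨B, b, X, hb, rfl, rfl⟩ := h
  obtain ⟨C, c, Y, hc, h1, h2⟩ := kurosh_free X (M.comap (FreeGroup.lift b))
  have hr : (FreeGroup.lift b).range = Subgroup.closure (Set.range b) :=
    FreeGroup.range_lift_eq_closure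
  have hMM : (M.comap (FreeGroup.lift b)).map (FreeGroup.lift b) = M := by
    rw [Subgroup.map_comap_eq, hr]; exact inf_eq_right.2 hM
  refine ⟨C, fun x => FreeGroup.lift b (c x), Y, ?_, ?_, ?_⟩
  · have : FreeGroup.lift (fun x => FreeGroup.lift b (c x)) =
        (FreeGroup.lift b).comp (FreeGroup.lift c) := by
      ext x; simp
    rw [this]
    exact hb.comp hc
  · rw [Set.range_comp' (FreeGroup.lift b) c, ← MonoidHom.map_closure, h1, hMM]
  · have : (fun x => FreeGroup.lift b (c x)) '' Y = FreeGroup.lift b '' (c '' Y) := by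
      rw [Set.image_image]
    rw [this, ← MonoidHom.map_closure, h2, Subgroup.map_inf _ _ _ hb, hMM, MonoidHom.map_closure,
      Set.image_image]
    simp

theorem BasisFactor.isFreeFactor {G : Type u} [Group G] {H K : Subgroup G}
    (h : BasisFactor H K) : IsFreeFactor H K := by
  classical
  obtain ⟨B, b, X, hb, rfl, rfl⟩ := h
  have hr : (FreeGroup.lift b).range = Subgroup.closure (Set.range b) :=
    FreeGroup.range_lift_eq_closure
  have hHK : Subgroup.closure (b '' X) ≤ Subgroup.closure (Set.range b) :=
    Subgroup.closure_mono (Set.image_subset_range _ _)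
  have hLK : Subgroup.closure (b '' Xᶜ) ≤ Subgroup.closure (Set.range b) :=
    Subgroup.closure_mono (Set.image_subset_range _ _)
  refine ⟨hHK, Subgroup.closure (b '' Xᶜ), hLK, ?_⟩
  set ψ := Monoid.Coprod.lift (Subgroup.inclusion hHK) (Subgroup.inclusion hLK) with hψ
  let σ : FreeGroup B →* Monoid.Coprod (Subgroup.closure (b '' X)) (Subgroup.closure (b '' Xᶜ)) :=
    FreeGroup.lift fun x => if h : x ∈ X
      then Monoid.Coprod.inl ⟨b x, Subgroup.subset_closure ⟨x, h, rfl⟩⟩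
      else Monoid.Coprod.inr ⟨b x, Subgroup.subset_closure ⟨x, h, rfl⟩⟩
  have hψσ : ∀ u, ((ψ (σ u) : Subgroup.closure (Set.range b)) : G) = FreeGroup.lift b u := by
    intro u
    have : ((Subgroup.subtype _).comp ψ).comp σ = FreeGroup.lift b := by
      ext x
      by_cases h : x ∈ X <;> simp [σ, ψ, h]
    exact DFunLike.congr_fun this u
  have hσ : Function.Surjective σ := by
    have main : ∀ (N : Subgroup (Monoid.Coprod (Subgroup.closure (b '' X))
        (Subgroup.closure (b '' Xᶜ)))), N = σ.range → N = ⊤ := by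
      intro N hN
      rw [eq_top_iff, ← Monoid.Coprod.range_inl_sup_range_inr, sup_le_iff]
      constructor
      · rintro _ ⟨⟨x, hx⟩, rfl⟩
        induction hx using Subgroup.closure_induction with
        | mem x hx =>
          obtain ⟨y, hy, rfl⟩ := hx
          rw [hN]
          exact ⟨FreeGroup.of y, by simp [σ, hy]⟩
        | one => exact (congrArg (· ∈ N) (map_one Monoid.Coprod.inl)).mpr (one_mem N)
        | mul x y hx hy ihx ihy =>
          have := mul_mem ihx ihy
          rwa [← map_mul] at this
        | inv x hx ih =>
          have := inv_mem ih
          rwa [← map_inv] at this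
      · rintro _ ⟨⟨x, hx⟩, rfl⟩
        induction hx using Subgroup.closure_induction with
        | mem x hx =>
          obtain ⟨y, hy, rfl⟩ := hx
          have hy' : y ∉ X := hy
          rw [hN]
          exact ⟨FreeGroup.of y, by simp [σ, hy']⟩
        | one => exact (congrArg (· ∈ N) (map_one Monoid.Coprod.inr)).mpr (one_mem N)
        | mul x y hx hy ihx ihy =>
          have := mul_mem ihx ihy
          rwa [← map_mul] at this
        | inv x hx ih =>
          have := inv_mem ih
          rwa [← map_inv] at this
    exact MonoidHom.range_eq_top.1 (main _ rfl)
  constructor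
  · rw [injective_iff_map_eq_one]
    intro x hx
    obtain ⟨u, rfl⟩ := hσ x
    have := hψσ u
    rw [hx] at this
    have h1 : u = 1 := hb (by rw [← this]; simp)
    rw [h1, map_one]
  · rintro ⟨x, hx⟩
    have hx' := hx
    rw [← hr] at hx'
    obtain ⟨u, rfl⟩ := hx'
    exact ⟨σ u, Subtype.ext (hψσ u)⟩

/-- `H` has a basis. -/
theorem exists_basis {A : Type u} (L : Subgroup (FreeGroup A)) :
    ∃ (B : Type u) (b : B → FreeGroup A), Function.Injective (FreeGroup.lift b) ∧
      Subgroup.closure (Set.range b) = L := by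
  let e := IsFreeGroup.mulEquiv L
  have h : FreeGroup.lift (fun x => ((e (FreeGroup.of x) : L) : FreeGroup A)) =
      L.subtype.comp e.toMonoidHom := by
    ext x; simp
  refine ⟨IsFreeGroup.Generators L, fun x => ((e (FreeGroup.of x) : L) : FreeGroup A), ?_, ?_⟩
  · rw [h]
    exact (Subgroup.subtype_injective L).comp e.injective
  · rw [← FreeGroup.range_lift_eq_closure, h, MonoidHom.range_comp,
      MonoidHom.range_eq_top.2 e.surjective, ← MonoidHom.range_eq_map, Subgroup.range_subtype]

theorem BasisFactor.trans_free {A : Type u} {H K M : Subgroup (FreeGroup A)}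
    (h : BasisFactor H K) (h' : IsFreeFactor K M) : BasisFactor H M := by
  obtain ⟨B, b, X, hb, hbK, hbH⟩ := h
  obtain ⟨hKM, L, hLM, hbij⟩ := h'
  obtain ⟨C, c, hc, hcL⟩ := exists_basis L
  have hrb : ∀ x, FreeGroup.lift b x ∈ K := fun x => by
    rw [← hbK, ← FreeGroup.range_lift_eq_closure]; exact ⟨x, rfl⟩
  have hrc : ∀ x, FreeGroup.lift c x ∈ L := fun x => by
    rw [← hcL, ← FreeGroup.range_lift_eq_closure]; exact ⟨x, rfl⟩
  let β : FreeGroup B →* K := (FreeGroup.lift b).codRestrict K hrb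
  let γ : FreeGroup C →* L := (FreeGroup.lift c).codRestrict L hrc
  have hβ : Function.Bijective β := by
    constructor
    · intro x y hxy
      exact hb (congrArg Subtype.val hxy)
    · rintro ⟨y, hy⟩
      rw [← hbK, ← FreeGroup.range_lift_eq_closure] at hy
      obtain ⟨x, rfl⟩ := hy
      exact ⟨x, rfl⟩
  have hγ : Function.Bijective γ := by
    constructor
    · intro x y hxy
      exact hc (congrArg Subtype.val hxy)
    · rintro ⟨y, hy⟩
      rw [← hcL, ← FreeGroup.range_lift_eq_closure] at hy
      obtain ⟨x, rfl⟩ := hy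
      exact ⟨x, rfl⟩
  let eβ := MulEquiv.ofBijective β hβ
  let eγ := MulEquiv.ofBijective γ hγ
  set ψ := Monoid.Coprod.lift (Subgroup.inclusion hKM) (Subgroup.inclusion hLM) with hψ
  -- map from the free group on the sum
  let σ : FreeGroup (B ⊕ C) →* Monoid.Coprod K L :=
    FreeGroup.lift (Sum.elim (fun x => Monoid.Coprod.inl (β (FreeGroup.of x)))
      (fun x => Monoid.Coprod.inr (γ (FreeGroup.of x))))
  let τ : Monoid.Coprod K L →* FreeGroup (B ⊕ C) :=
    Monoid.Coprod.lift ((FreeGroup.map Sum.inl).comp eβ.symm.toMonoidHom)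
      ((FreeGroup.map Sum.inr).comp eγ.symm.toMonoidHom)
  have e1 : ∀ x, eβ.symm (β x) = x := fun x => eβ.symm_apply_apply x
  have e2 : ∀ x, eγ.symm (γ x) = x := fun x => eγ.symm_apply_apply x
  have hτσ : τ.comp σ = MonoidHom.id _ := by
    ext x
    rcases x with x | x <;> simp [σ, τ, e1, e2]
  have hσi : Function.Injective σ := by
    intro x y hxy
    have := congrArg τ hxy
    rw [← MonoidHom.comp_apply, ← MonoidHom.comp_apply, hτσ] at this
    exact this
  have hl : FreeGroup.lift (Sum.elim b c) = (M.subtype.comp ψ).comp σ := by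
    ext x
    rcases x with x | x <;> simp [σ, ψ, β, γ]
  have hM : K ⊔ L = M := by
    have h1 : (M.subtype.comp ψ).range = M := by
      rw [MonoidHom.range_comp, MonoidHom.range_eq_top.2 hbij.2, ← MonoidHom.range_eq_map,
        Subgroup.range_subtype]
    rw [MonoidHom.range_eq_map, ← Monoid.Coprod.range_inl_sup_range_inr, Subgroup.map_sup,
      ← MonoidHom.range_comp, ← MonoidHom.range_comp] at h1
    have h2 : (M.subtype.comp ψ).comp Monoid.Coprod.inl = K.subtype := by ext x; simp [ψ]
    have h3 : (M.subtype.comp ψ).comp Monoid.Coprod.inr = L.subtype := by ext x; simp [ψ]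
    rwa [h2, h3, Subgroup.range_subtype, Subgroup.range_subtype] at h1
  refine ⟨B ⊕ C, Sum.elim b c, Sum.inl '' X, ?_, ?_, ?_⟩
  · rw [hl]
    exact ((Subgroup.subtype_injective M).comp hbij.1).comp hσi
  · rw [Set.Sum.elim_range, Subgroup.closure_union, hbK, hcL, hM]
  · rw [Set.image_image]; exact hbH

theorem IsFreeFactor.basisFactor {A : Type u} {H K : Subgroup (FreeGroup A)}
    (h : IsFreeFactor H K) : BasisFactor H K := by
  obtain ⟨B, b, hb, hbH⟩ := exists_basis H
  exact BasisFactor.trans_free ⟨B, b, Set.univ, hb, hbH, by rw [Set.image_univ, hbH]⟩ h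

theorem IsFreeFactor.inf_inf {A : Type u} {H K H' K' : Subgroup (FreeGroup A)}
    (h : IsFreeFactor H K) (h' : IsFreeFactor H' K') : IsFreeFactor (H ⊓ H') (K ⊓ K') := by
  have hHK : H ≤ K := h.choose
  have hHK' : H' ≤ K' := h'.choose
  have h1 : BasisFactor (H ⊓ (K ⊓ K')) (K ⊓ K') := h.basisFactor.inf inf_le_left
  have h2 : BasisFactor (H' ⊓ (H ⊓ (K ⊓ K'))) (H ⊓ (K ⊓ K')) :=
    h'.basisFactor.inf (inf_le_right.trans inf_le_right)
  have h3 := (h2.trans_free h1.isFreeFactor).isFreeFactor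
  have h4 : H' ⊓ (H ⊓ (K ⊓ K')) = H ⊓ H' :=
    le_antisymm (le_inf (inf_le_right.trans inf_le_left) inf_le_left)
      (le_inf inf_le_right (le_inf inf_le_left (inf_le_inf hHK hHK')))
  rwa [h4] at h3

theorem isFreeFactor_self {A : Type u} (K : Subgroup (FreeGroup A)) : IsFreeFactor K K := by
  obtain ⟨B, b, hb, hbH⟩ := exists_basis K
  exact BasisFactor.isFreeFactor ⟨B, b, Set.univ, hb, hbH, by rw [Set.image_univ, hbH]⟩

end Helpers

/-- If `H i` is a free factor of `K i` for each `i` in a finite nonempty index set,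
then `⋂ H i` is a free factor of `⋂ K i`. -/
theorem iInf_isFreeFactor_iInf {A : Type*} {ι : Type*} [Finite ι] [Nonempty ι]
    (H K : ι → Subgroup (FreeGroup A)) (h : ∀ i, IsFreeFactor (H i) (K i)) :
    IsFreeFactor (⨅ i, H i) (⨅ i, K i) := by
  classical
  have := Fintype.ofFinite ι
  have key : ∀ s : Finset ι, IsFreeFactor (s.inf H) (s.inf K) := by
    intro s
    induction s using Finset.induction_on with
    | empty => exact isFreeFactor_self _
    | insert a s _ ih =>
      rw [Finset.inf_insert, Finset.inf_insert]
      exact (h a).inf_inf ih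
  have := key Finset.univ
  rwa [Finset.inf_univ_eq_iInf, Finset.inf_univ_eq_iInf] at this
end

section
/- Let H be a finitely generated subgroup of a free group F = FreeGroup A and let K be any subgroup of F with H ≤ K. Then there exists a unique subgroup H' of F such that H ≤alg H' and H' is a free factor of K (H' is the K-algebraic closure of H; Takahasi's theorem). -/
/-- `H ≤alg K`: the extension `H ≤ K` is algebraic, i.e. `H` is contained in no
proper free factor of `K`. -/
def IsAlgebraicExtension {G : Type*} [Group G] (H K : Subgroup G) : Prop :=
  H ≤ K ∧ ∀ L : Subgroup G, H ≤ L → IsFreeFactor L K → L = K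

open Monoid Function

universe u v w

section Generic

theorem isFreeFactor_of_injective {G : Type u} [Group G] {P : Type v} {Q : Type w} [Group P] [Group Q]
    (f : P →* G) (g : Q →* G) (h : Injective (Coprod.lift f g)) :
    IsFreeFactor f.range (Coprod.lift f g).range := by
  have hf : Injective f := by
    intro x y hxy
    apply Coprod.inl_injective (N := Q)
    apply h
    simpa using hxy
  have hg : Injective g := by
    intro x y hxy
    apply Coprod.inr_injective (M := P)
    apply h
    simpa using hxy
  have h1 : f.range ≤ (Coprod.lift f g).range := by
    rw [Coprod.range_lift]; exact le_sup_left
  have h2 : g.range ≤ (Coprod.lift f g).range := by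
    rw [Coprod.range_lift]; exact le_sup_right
  let c := MulEquiv.coprodCongr (MonoidHom.ofInjective hf) (MonoidHom.ofInjective hg)
  have key : ∀ x, (Coprod.lift (Subgroup.inclusion h1) (Subgroup.inclusion h2) (c x) : G)
      = Coprod.lift f g x := by
    intro x
    have : ((Subgroup.subtype _).comp
      (Coprod.lift (Subgroup.inclusion h1) (Subgroup.inclusion h2))).comp c.toMonoidHom
        = Coprod.lift f g := by
      apply Coprod.hom_ext <;> ext x <;> rfl
    exact DFunLike.congr_fun this x
  refine ⟨h1, g.range, h2, ?_, ?_⟩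
  · intro x y hxy
    obtain ⟨x, rfl⟩ := c.surjective x
    obtain ⟨y, rfl⟩ := c.surjective y
    have := congrArg Subtype.val hxy
    rw [key, key] at this
    rw [h this]
  · rintro ⟨y, x, rfl⟩
    exact ⟨c x, Subtype.ext (key x)⟩

theorem IsFreeFactor.exists_compl {G : Type u} [Group G] {H K : Subgroup G} (h : IsFreeFactor H K) :
    ∃ L : Subgroup G, Injective (Coprod.lift H.subtype L.subtype) ∧
      (Coprod.lift H.subtype L.subtype).range = K := by
  obtain ⟨h1, L, h2, hi, hs⟩ := h
  have key : K.subtype.comp (Coprod.lift (Subgroup.inclusion h1) (Subgroup.inclusion h2))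
      = Coprod.lift H.subtype L.subtype := by
    apply Coprod.hom_ext <;> ext x <;> rfl
  refine ⟨L, ?_, ?_⟩
  · rw [← key]
    exact (Subgroup.subtype_injective K).comp hi
  · rw [← key, MonoidHom.range_comp, MonoidHom.range_eq_top.2 hs, ← MonoidHom.range_eq_map,
      Subgroup.range_subtype]

theorem IsFreeFactor.le {G : Type u} [Group G] {H K : Subgroup G} (h : IsFreeFactor H K) :
    H ≤ K := h.1

theorem IsFreeFactor.map {G : Type u} {G' : Type v} [Group G] [Group G'] {H K : Subgroup G}
    (h : IsFreeFactor H K) (e : G →* G') (he : Injective e) :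
    IsFreeFactor (H.map e) (K.map e) := by
  obtain ⟨L, hi, rfl⟩ := h.exists_compl
  have := isFreeFactor_of_injective (e.comp H.subtype) (e.comp L.subtype)
    (by rw [← Coprod.comp_lift]; exact he.comp hi)
  rwa [← Coprod.comp_lift, MonoidHom.range_comp, MonoidHom.range_comp, Subgroup.range_subtype]
    at this

theorem IsFreeFactor.trans {G : Type u} [Group G] {H K M : Subgroup G}
    (h : IsFreeFactor H K) (h' : IsFreeFactor K M) : IsFreeFactor H M := by
  obtain ⟨L, hi, hr⟩ := h.exists_compl
  obtain ⟨N, hi', rfl⟩ := h'.exists_compl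
  let a : Coprod H L ≃* K := (MonoidHom.ofInjective hi).trans (MulEquiv.subgroupCongr hr)
  have key : (Coprod.lift H.subtype (Coprod.lift L.subtype N.subtype)) =
     ((Coprod.lift K.subtype N.subtype).comp
      (MulEquiv.coprodCongr a (MulEquiv.refl N)).toMonoidHom).comp
      (MulEquiv.coprodAssoc H L N).symm.toMonoidHom := by
    apply Coprod.hom_ext
    · ext x; rfl
    apply Coprod.hom_ext <;> ext x <;> rfl
  have := isFreeFactor_of_injective H.subtype (Coprod.lift L.subtype N.subtype) (by
    rw [key]
    exact (hi'.comp (MulEquiv.injective _)).comp (MulEquiv.injective _))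
  have hrange : (Coprod.lift H.subtype (Coprod.lift L.subtype N.subtype)).range =
      (Coprod.lift K.subtype N.subtype).range := by
    rw [key, MonoidHom.range_comp, MonoidHom.range_eq_top.2 (MulEquiv.surjective _),
      ← MonoidHom.range_eq_map, MonoidHom.range_comp,
      MonoidHom.range_eq_top.2 (MulEquiv.surjective _), ← MonoidHom.range_eq_map]
  rwa [hrange, Subgroup.range_subtype] at this

/-- The free group on a sum is the coproduct of the free groups. -/
def coprodFreeGroup (X : Type u) (Y : Type v) :
    Coprod (FreeGroup X) (FreeGroup Y) ≃* FreeGroup (X ⊕ Y) :=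
  MonoidHom.toMulEquiv
    (Coprod.lift (FreeGroup.map Sum.inl) (FreeGroup.map Sum.inr))
    (FreeGroup.lift (Sum.elim (fun x => Coprod.inl (FreeGroup.of x))
      (fun y => Coprod.inr (FreeGroup.of y))))
    (by apply Coprod.hom_ext <;> ext x <;> simp)
    (by ext x; rcases x with x | x <;> simp)

end Generic

section Schreier

theorem exists_rec {Ω : Type u} {F : Type v} [Group F] (S : Set Ω) (d : Ω → ℕ) (par : Ω → Ω)
    (h : ∀ ω, ω ∉ S → d (par ω) < d ω) (t0 u : Ω → F) :
    ∃ t : Ω → F, (∀ ω ∈ S, t ω = t0 ω) ∧ ∀ ω, ω ∉ S → t ω = u ω * t (par ω) := by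
  classical
  let t : Ω → F := (measure d).wf.fix
    (fun ω r => if hω : ω ∈ S then t0 ω else u ω * r (par ω) (h ω hω))
  have ht : ∀ ω, t ω = if hω : ω ∈ S then t0 ω else u ω * t (par ω) := fun ω =>
    (measure d).wf.fix_eq _ ω
  refine ⟨t, fun ω hω => ?_, fun ω hω => ?_⟩
  · rw [ht, dif_pos hω]
  · rw [ht, dif_neg hω]

theorem exists_section {Z : Type u} (X : Set Z) (B : Subgroup (FreeGroup Z)) :
    ∃ t : FreeGroup Z ⧸ B → FreeGroup Z, t (1 : FreeGroup Z) = 1 ∧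
      (∀ ω, t ω • ((1 : FreeGroup Z) : FreeGroup Z ⧸ B) = ω) ∧
      (∀ a ∈ Subgroup.closure (FreeGroup.of '' X),
        t (a • ((1 : FreeGroup Z) : FreeGroup Z ⧸ B)) ∈ Subgroup.closure (FreeGroup.of '' X)) ∧
      ∀ P : FreeGroup Z ⧸ B → Prop,
        (∀ a ∈ Subgroup.closure (FreeGroup.of '' X),
          P (a • ((1 : FreeGroup Z) : FreeGroup Z ⧸ B))) →
        (∀ z ω, P ω → t (FreeGroup.of z • ω) = FreeGroup.of z * t ω → P (FreeGroup.of z • ω)) →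
        (∀ z ω, P (FreeGroup.of z • ω) → t (FreeGroup.of z • ω) = FreeGroup.of z * t ω → P ω) →
        ∀ ω, P ω := by
  classical
  set A := Subgroup.closure (FreeGroup.of '' X) with hA
  set o : FreeGroup Z ⧸ B := ((1 : FreeGroup Z) : FreeGroup Z ⧸ B) with ho
  let S : Set (FreeGroup Z ⧸ B) := {ω | ∃ a ∈ A, a • o = ω}
  have hoS : o ∈ S := ⟨1, A.one_mem, one_smul _ _⟩
  have hex : ∀ ω, ∃ n, ∃ L : List (Z × Bool), L.length = n ∧
      ∃ ω' ∈ S, FreeGroup.mk L • ω' = ω := by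
    intro ω
    obtain ⟨g, rfl⟩ := QuotientGroup.mk_surjective ω
    refine ⟨_, g.toWord, rfl, o, hoS, ?_⟩
    rw [FreeGroup.mk_toWord, ho, MulAction.Quotient.smul_coe]
    simp
  let d : FreeGroup Z ⧸ B → ℕ := fun ω => Nat.find (hex ω)
  have hpar : ∀ ω, ∃ p : FreeGroup Z ⧸ B, ∃ v : FreeGroup Z, ω ∉ S → d p < d ω ∧ ω = v • p ∧
      ∃ z, v = FreeGroup.of z ∨ v = (FreeGroup.of z)⁻¹ := by
    intro ω
    by_cases hω : ω ∈ S
    · exact ⟨ω, 1, fun h => absurd hω h⟩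
    obtain ⟨L, hL, ω', hω', hLω⟩ := Nat.find_spec (hex ω)
    rcases L with _ | ⟨⟨z, b⟩, L⟩
    · exfalso
      apply hω
      rw [← hLω]
      have : (FreeGroup.mk ([] : List (Z × Bool))) = 1 := rfl
      rw [this, one_smul]; exact hω'
    · refine ⟨FreeGroup.mk L • ω', FreeGroup.mk [(z, b)], fun _ => ⟨?_, ?_, z, ?_⟩⟩
      · have h1 : d (FreeGroup.mk L • ω') ≤ L.length := Nat.find_min' _ ⟨L, rfl, ω', hω', rfl⟩
        have h2 : L.length + 1 = d ω := hL
        omega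
      · rw [← hLω, smul_smul, FreeGroup.mul_mk]; rfl
      · rcases b with _ | _
        · right; rfl
        · left; rfl
  choose par v hpv using hpar
  have ht0 : ∀ ω, ∃ g : FreeGroup Z, ω ∈ S → g ∈ A ∧ g • o = ω ∧ (ω = o → g = 1) := by
    intro ω
    by_cases hω : ω ∈ S
    · by_cases h : ω = o
      · exact ⟨1, fun _ => ⟨A.one_mem, by rw [one_smul, h], fun _ => rfl⟩⟩
      · obtain ⟨a, ha, hao⟩ := hω
        exact ⟨a, fun _ => ⟨ha, hao, fun h' => absurd h' h⟩⟩
    · exact ⟨1, fun h => absurd h hω⟩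
  choose t0 ht0 using ht0
  obtain ⟨t, ht1, ht2⟩ := exists_rec S d par (fun ω hω => (hpv ω hω).1) t0 v
  refine ⟨t, ?_, ?_, ?_, ?_⟩
  · rw [ht1 _ hoS]; exact (ht0 _ hoS).2.2 rfl
  · intro ω
    induction hn : d ω using Nat.strong_induction_on generalizing ω with
    | _ n ih =>
      by_cases hω : ω ∈ S
      · rw [ht1 _ hω]; exact (ht0 _ hω).2.1
      · rw [ht2 _ hω, mul_smul, ih _ (hn ▸ (hpv ω hω).1) _ rfl]
        exact (hpv ω hω).2.1.symm
  · intro a ha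
    have : a • o ∈ S := ⟨a, ha, rfl⟩
    rw [ht1 _ this]; exact (ht0 _ this).1
  · intro P h1 h2 h3 ω
    induction hn : d ω using Nat.strong_induction_on generalizing ω with
    | _ n ih =>
      by_cases hω : ω ∈ S
      · obtain ⟨a, ha, rfl⟩ := hω
        exact h1 a ha
      · obtain ⟨hd, hv, z, hz⟩ := hpv ω hω
        have hp := ih _ (hn ▸ hd) _ rfl
        have ht := ht2 ω hω
        rcases hz with hz | hz
        · rw [hz] at hv ht
          rw [hv]
          apply h2 z _ hp
          rw [← hv, ht]
        · rw [hz] at hv ht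
          have hv' : par ω = FreeGroup.of z • ω := by
            conv_rhs => rw [hv]
            rw [smul_inv_smul]
          rw [hv'] at hp ht
          apply h3 z ω hp
          rw [ht, mul_inv_cancel_left]

theorem exists_cocycle {Z : Type u} {Ω : Type v} [MulAction (FreeGroup Z) Ω] {G : Type w} [Group G]
    (c0 : Z → Ω → G) : ∃ c : FreeGroup Z → Ω → G,
      (∀ g h ω, c (g * h) ω = c g (h • ω) * c h ω) ∧ ∀ z ω, c (FreeGroup.of z) ω = c0 z ω := by
  let Φ : FreeGroup Z →* Equiv.Perm (Ω × G) := FreeGroup.lift fun z =>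
    { toFun := fun p => (FreeGroup.of z • p.1, c0 z p.1 * p.2)
      invFun := fun p => ((FreeGroup.of z)⁻¹ • p.1, (c0 z ((FreeGroup.of z)⁻¹ • p.1))⁻¹ * p.2)
      left_inv := fun p => by simp
      right_inv := fun p => by simp }
  have hof : ∀ z p, Φ (FreeGroup.of z) p = (FreeGroup.of z • p.1, c0 z p.1 * p.2) := by
    intro z p; simp [Φ]
  have hof' : ∀ z p, Φ (FreeGroup.of z)⁻¹ p
      = ((FreeGroup.of z)⁻¹ • p.1, (c0 z ((FreeGroup.of z)⁻¹ • p.1))⁻¹ * p.2) := by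
    intro z p
    rw [map_inv, Equiv.Perm.inv_eq_iff_eq, hof]; simp
  have key : ∀ g ω x, Φ g (ω, x) = (g • ω, (Φ g (ω, 1)).2 * x) := by
    intro g
    induction g using FreeGroup.induction_on with
    | C1 => intro ω x; simp
    | of z => intro ω x; simp [hof]
    | inv_of z _ => intro ω x; rw [hof', hof']; simp
    | mul g h hg hh =>
      intro ω x
      rw [map_mul, Equiv.Perm.mul_apply, Equiv.Perm.mul_apply, hh, hg, hh ω 1, hg _ (_ * 1)]
      simp [mul_smul, mul_assoc]
  refine ⟨fun g ω => (Φ g (ω, 1)).2, fun g h ω => ?_, fun z ω => by simp [hof]⟩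
  simp only [map_mul, Equiv.Perm.mul_apply]
  rw [key h, key g]

theorem free_factor_inf {Z : Type u} (X : Set Z) (B : Subgroup (FreeGroup Z)) :
    IsFreeFactor (Subgroup.closure (FreeGroup.of '' X) ⊓ B) B := by
  classical
  obtain ⟨t, t1, ts, tA, tind⟩ := exists_section X B
  set A := Subgroup.closure (FreeGroup.of '' X) with hA
  set o : FreeGroup Z ⧸ B := ((1 : FreeGroup Z) : FreeGroup Z ⧸ B) with ho
  have hB : ∀ g, g ∈ B ↔ g • o = o := by
    intro g
    rw [ho, MulAction.Quotient.smul_coe, eq_comm, QuotientGroup.eq]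
    simp
  let S : Set (FreeGroup Z ⧸ B) := {ω | ∃ a ∈ A, a • o = ω}
  have hoS : o ∈ S := ⟨1, A.one_mem, one_smul _ _⟩
  have hS : ∀ g ∈ A, ∀ ω ∈ S, g • ω ∈ S := by
    rintro g hg _ ⟨a, ha, rfl⟩
    exact ⟨g * a, A.mul_mem hg ha, mul_smul _ _ _⟩
  have htA : ∀ ω ∈ S, t ω ∈ A := by
    rintro _ ⟨a, ha, rfl⟩
    exact tA a ha
  have hbB : ∀ g ω, (t (g • ω))⁻¹ * g * t ω ∈ B := by
    intro g ω
    rw [hB, mul_smul, mul_smul, ts, inv_smul_eq_iff, ts]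
  have hbA : ∀ g ∈ A, ∀ ω ∈ S, (t (g • ω))⁻¹ * g * t ω ∈ A := fun g hg ω hω =>
    A.mul_mem (A.mul_mem (A.inv_mem (htA _ (hS g hg _ hω))) hg) (htA _ hω)
  have hX : ∀ z ∈ X, FreeGroup.of z ∈ A := fun z hz =>
    Subgroup.subset_closure ⟨z, hz, rfl⟩
  let N := {p : Z × (FreeGroup Z ⧸ B) // ¬ (p.1 ∈ X ∧ p.2 ∈ S) ∧
    ¬ t (FreeGroup.of p.1 • p.2) = FreeGroup.of p.1 * t p.2}
  let c0 : Z → (FreeGroup Z ⧸ B) → Coprod ↥(A ⊓ B) (FreeGroup N) := fun z ω =>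
    if h : z ∈ X ∧ ω ∈ S then
      Coprod.inl ⟨(t (FreeGroup.of z • ω))⁻¹ * FreeGroup.of z * t ω,
        hbA _ (hX z h.1) _ h.2, hbB _ _⟩
    else if h2 : t (FreeGroup.of z • ω) = FreeGroup.of z * t ω then 1
    else Coprod.inr (FreeGroup.of ⟨(z, ω), h, h2⟩)
  let β2 : FreeGroup N →* FreeGroup Z := FreeGroup.lift fun n =>
    (t (FreeGroup.of n.1.1 • n.1.2))⁻¹ * FreeGroup.of n.1.1 * t n.1.2
  let β : Coprod ↥(A ⊓ B) (FreeGroup N) →* FreeGroup Z := Coprod.lift (A ⊓ B).subtype β2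
  obtain ⟨c, cmul, cof⟩ := exists_cocycle c0
  have c1 : ∀ ω, c 1 ω = 1 := by
    intro ω
    have := cmul 1 1 ω
    simpa using this
  have cinv : ∀ g ω, c g⁻¹ ω = (c g (g⁻¹ • ω))⁻¹ := by
    intro g ω
    have := cmul g g⁻¹ ω
    rw [mul_inv_cancel, c1] at this
    exact (inv_eq_of_mul_eq_one_right this.symm).symm
  have hβof : ∀ z ω, β (c (FreeGroup.of z) ω) =
      (t (FreeGroup.of z • ω))⁻¹ * FreeGroup.of z * t ω := by
    intro z ω
    rw [cof]
    by_cases h : z ∈ X ∧ ω ∈ S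
    · simp only [c0, dif_pos h, β]; simp
    · by_cases h2 : t (FreeGroup.of z • ω) = FreeGroup.of z * t ω
      · simp only [c0, dif_neg h, dif_pos h2, map_one]; rw [h2]; group
      · simp only [c0, dif_neg h, dif_neg h2, β, β2]; simp
  have hβ : ∀ g ω, β (c g ω) = (t (g • ω))⁻¹ * g * t ω := by
    intro g
    induction g using FreeGroup.induction_on with
    | C1 => intro ω; simp [c1]
    | of z => exact hβof z
    | inv_of z _ => intro ω; rw [cinv, map_inv, hβof, smul_inv_smul]; group
    | mul g h hg hh => intro ω; rw [cmul, map_mul, hg, hh, mul_smul]; group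
  have hβB : ∀ x, β x • o = o := by
    intro x
    rw [← hB]
    have h1 : β.range ≤ B := by
      rw [Coprod.range_lift, Subgroup.range_subtype]
      apply sup_le inf_le_right
      rw [FreeGroup.range_lift_eq_closure, Subgroup.closure_le]
      rintro _ ⟨n, rfl⟩
      exact hbB _ _
    exact h1 ⟨x, rfl⟩
  have hcA' : ∀ g ∈ A, ∀ ω ∈ S, ∃ y : ↥(A ⊓ B), c g ω = Coprod.inl y := by
    intro g hg
    induction hg using Subgroup.closure_induction with
    | mem x hx =>
      obtain ⟨z, hz, rfl⟩ := hx
      intro ω hω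
      rw [cof]
      simp only [c0, dif_pos (And.intro hz hω)]
      exact ⟨_, rfl⟩
    | one => intro ω _; exact ⟨1, by rw [c1, map_one]⟩
    | mul g h hg hh ihg ihh =>
      intro ω hω
      obtain ⟨y, hy⟩ := ihg _ (hS h hh ω hω)
      obtain ⟨y', hy'⟩ := ihh ω hω
      exact ⟨y * y', by rw [cmul, hy, hy', map_mul]⟩
    | inv g hg ih =>
      intro ω hω
      obtain ⟨y, hy⟩ := ih _ (hS _ (A.inv_mem hg) ω hω)
      exact ⟨y⁻¹, by rw [cinv, hy, map_inv]⟩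
  have hcA : ∀ g ∈ A, ∀ ω ∈ S, ∀ y : ↥(A ⊓ B), (y : FreeGroup Z) = (t (g • ω))⁻¹ * g * t ω →
      c g ω = Coprod.inl y := by
    intro g hg ω hω y hy
    obtain ⟨y', hy'⟩ := hcA' g hg ω hω
    have h1 := hβ g ω
    rw [hy', ← hy] at h1
    have h2 : y' = y := by
      apply Subtype.ext
      rw [← h1]; simp [β]
    rw [hy', h2]
  have hc0t : ∀ z ω, t (FreeGroup.of z • ω) = FreeGroup.of z * t ω →
      c (FreeGroup.of z) ω = 1 := by
    intro z ω h2
    by_cases h : z ∈ X ∧ ω ∈ S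
    · rw [hcA _ (hX z h.1) ω h.2 1 (by rw [h2]; simp), map_one]
    · rw [cof]; simp only [c0, dif_neg h, dif_pos h2]
  have hct : ∀ ω, c (t ω) o = 1 := by
    apply tind
    · intro a ha
      rw [hcA _ (tA a ha) o hoS 1 (by rw [ts, t1]; simp), map_one]
    · intro z ω h h2
      rw [h2, cmul, h, ts, hc0t z ω h2, one_mul]
    · intro z ω h h2
      rw [h2, cmul, ts, hc0t z ω h2, one_mul] at h
      exact h
  have hβinv : ∀ x, c (β x) o = x := by
    let Θ : Coprod ↥(A ⊓ B) (FreeGroup N) →* Coprod ↥(A ⊓ B) (FreeGroup N) :=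
      { toFun := fun x => c (β x) o
        map_one' := by rw [map_one, c1]
        map_mul' := fun x y => by rw [map_mul, cmul, hβB] }
    have : Θ = MonoidHom.id _ := by
      apply Coprod.hom_ext
      · ext y
        change c (β (Coprod.inl y)) o = Coprod.inl y
        have hy : β (Coprod.inl y) = y := by simp [β]
        rw [hy]
        apply hcA _ y.2.1 o hoS
        rw [(hB _).1 y.2.2, t1]; simp
      · ext n
        change c (β (Coprod.inr (FreeGroup.of n))) o = Coprod.inr (FreeGroup.of n)
        have hy : β (Coprod.inr (FreeGroup.of n)) =
          (t (FreeGroup.of n.1.1 • n.1.2))⁻¹ * FreeGroup.of n.1.1 * t n.1.2 := by simp [β, β2]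
        have h3 : (t (FreeGroup.of n.1.1 • n.1.2))⁻¹ • FreeGroup.of n.1.1 • n.1.2 = o := by
          rw [inv_smul_eq_iff, ts]
        rw [hy, cmul, cmul, hct, ts, cinv, h3, hct, cof]
        simp only [c0, dif_neg n.2.1, dif_neg n.2.2]
        simp
    exact fun x => DFunLike.congr_fun this x
  have hres := isFreeFactor_of_injective (A ⊓ B).subtype β2
    (LeftInverse.injective (g := fun g => c g o) hβinv)
  have hrange : (Coprod.lift (A ⊓ B).subtype β2).range = B := by
    apply le_antisymm
    · rintro _ ⟨x, rfl⟩
      exact (hB _).2 (hβB x)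
    · intro g hg
      refine ⟨c g o, ?_⟩
      change β (c g o) = g
      rw [hβ, (hB g).1 hg, t1]; simp
  rwa [hrange, Subgroup.range_subtype] at hres

end Schreier

section Free

theorem exists_free_param {A : Type u} (K : Subgroup (FreeGroup A)) :
    ∃ (ι : Type u) (e : FreeGroup ι →* FreeGroup A), Injective e ∧ e.range = K := by
  refine ⟨IsFreeGroup.Generators K, K.subtype.comp (IsFreeGroup.mulEquiv K).toMonoidHom,
    (Subgroup.subtype_injective K).comp (MulEquiv.injective _), ?_⟩
  rw [MonoidHom.range_comp, MonoidHom.range_eq_top.2 (MulEquiv.surjective _),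
    ← MonoidHom.range_eq_map, Subgroup.range_subtype]

/-- A free factor is generated by part of a basis. -/
theorem IsFreeFactor.exists_basis {A : Type u} {H K : Subgroup (FreeGroup A)}
    (h : IsFreeFactor H K) : ∃ (ι κ : Type u) (e : FreeGroup (ι ⊕ κ) →* FreeGroup A),
      Injective e ∧ e.range = K ∧ (e.comp (FreeGroup.map Sum.inl)).range = H := by
  obtain ⟨L, hi, hr⟩ := h.exists_compl
  let a := (coprodFreeGroup (IsFreeGroup.Generators H) (IsFreeGroup.Generators L)).symm.trans
    (MulEquiv.coprodCongr (IsFreeGroup.mulEquiv H) (IsFreeGroup.mulEquiv L))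
  refine ⟨_, _, (Coprod.lift H.subtype L.subtype).comp a.toMonoidHom,
    hi.comp (MulEquiv.injective _), ?_, ?_⟩
  · rw [MonoidHom.range_comp, MonoidHom.range_eq_top.2 (MulEquiv.surjective _),
      ← MonoidHom.range_eq_map, hr]
  · have : ((Coprod.lift H.subtype L.subtype).comp a.toMonoidHom).comp (FreeGroup.map Sum.inl)
        = H.subtype.comp (IsFreeGroup.mulEquiv H).toMonoidHom := by
      ext x
      simp [a, coprodFreeGroup]
    rw [this, MonoidHom.range_comp, MonoidHom.range_eq_top.2 (MulEquiv.surjective _),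
      ← MonoidHom.range_eq_map, Subgroup.range_subtype]

theorem IsFreeFactor.inf {A : Type u} {H B K : Subgroup (FreeGroup A)}
    (h : IsFreeFactor H K) (hB : B ≤ K) : IsFreeFactor (H ⊓ B) B := by
  obtain ⟨ι, κ, e, he, hK, hH⟩ := h.exists_basis
  have h1 := (free_factor_inf (Set.range (Sum.inl : ι → ι ⊕ κ)) (B.comap e)).map e he
  have h2 : Subgroup.closure (FreeGroup.of '' (Set.range (Sum.inl : ι → ι ⊕ κ)))
      = (FreeGroup.map (Sum.inl : ι → ι ⊕ κ)).range := by
    rw [FreeGroup.range_map]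
  rw [Subgroup.map_inf _ _ _ he, Subgroup.map_comap_eq, h2, ← MonoidHom.range_comp, hH, hK,
    inf_eq_right.2 hB] at h1
  exact h1

theorem exists_finite_support {Z : Type u} (s : Finset (FreeGroup Z)) :
    ∃ S : Finset Z, ∀ g ∈ s, g ∈ (FreeGroup.map (Subtype.val : ↥(S : Set Z) → Z)).range := by
  classical
  have one : ∀ g : FreeGroup Z, ∃ S : Finset Z, g ∈ Subgroup.closure (FreeGroup.of '' (S : Set Z)) := by
    intro g
    induction g using FreeGroup.induction_on with
    | C1 => exact ⟨∅, Subgroup.one_mem _⟩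
    | of z => exact ⟨{z}, Subgroup.subset_closure ⟨z, by simp, rfl⟩⟩
    | inv_of z _ => exact ⟨{z}, Subgroup.inv_mem _ (Subgroup.subset_closure ⟨z, by simp, rfl⟩)⟩
    | mul g h hg hh =>
      obtain ⟨S, hS⟩ := hg
      obtain ⟨T, hT⟩ := hh
      refine ⟨S ∪ T, Subgroup.mul_mem _ (Subgroup.closure_mono (Set.image_mono ?_) hS)
        (Subgroup.closure_mono (Set.image_mono ?_) hT)⟩ <;> simp
  choose f hf using one
  refine ⟨s.biUnion f, fun g hg => ?_⟩
  rw [FreeGroup.range_map, Subtype.range_val]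
  refine Subgroup.closure_mono (Set.image_mono ?_) (hf g)
  exact_mod_cast Finset.subset_biUnion_of_mem f hg

theorem isFreeFactor_subset {Z : Type u} (S : Set Z) :
    IsFreeFactor (FreeGroup.map (Subtype.val : S → Z)).range ⊤ := by
  classical
  have key : Coprod.lift (FreeGroup.map (Subtype.val : S → Z))
      (FreeGroup.map (Subtype.val : (Sᶜ : Set Z) → Z)) =
      (FreeGroup.freeGroupCongr (Equiv.Set.sumCompl S)).toMonoidHom.comp
        (coprodFreeGroup S (Sᶜ : Set Z)).toMonoidHom := by
    apply Coprod.hom_ext <;> ext x <;> simp [coprodFreeGroup]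
  have := isFreeFactor_of_injective (FreeGroup.map (Subtype.val : S → Z))
      (FreeGroup.map (Subtype.val : (Sᶜ : Set Z) → Z))
      (by
        rw [key]
        exact (FreeGroup.freeGroupCongr (Equiv.Set.sumCompl S)).injective.comp
          (coprodFreeGroup S (Sᶜ : Set Z)).injective)
  have hrange : (Coprod.lift (FreeGroup.map (Subtype.val : S → Z))
      (FreeGroup.map (Subtype.val : (Sᶜ : Set Z) → Z))).range = ⊤ := by
    rw [key]
    exact MonoidHom.range_eq_top.2
      ((FreeGroup.freeGroupCongr (Equiv.Set.sumCompl S)).surjective.comp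
        (coprodFreeGroup S (Sᶜ : Set Z)).surjective)
  rwa [hrange] at this

theorem exists_fg_factor {A : Type u} (H K : Subgroup (FreeGroup A))
    (hH : H.FG) (hHK : H ≤ K) :
    ∃ n : ℕ, ∃ (ι : Type u) (_ : Finite ι) (f : FreeGroup ι →* FreeGroup A), Nat.card ι = n ∧
      Injective f ∧ H ≤ f.range ∧ IsFreeFactor f.range K := by
  classical
  obtain ⟨Z, e, he, rfl⟩ := exists_free_param K
  obtain ⟨s, rfl⟩ := hH
  have hs : ∀ g ∈ s, ∃ y, e y = g := fun g hg => hHK (Subgroup.subset_closure hg)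
  let s' : Finset (FreeGroup Z) := s.preimage e he.injOn
  obtain ⟨S, hS⟩ := exists_finite_support s'
  refine ⟨_, ↥(S : Set Z), inferInstance, e.comp (FreeGroup.map Subtype.val), rfl,
    he.comp (FreeGroup.map_injective Subtype.val_injective), ?_, ?_⟩
  · rw [Subgroup.closure_le]
    intro g hg
    obtain ⟨y, rfl⟩ := hs g hg
    obtain ⟨x, hx⟩ := hS y (by simpa [s'] using hg)
    exact ⟨x, by simp [hx]⟩
  · have := (isFreeFactor_subset (S : Set Z)).map e he
    rwa [← MonoidHom.range_comp, ← MonoidHom.range_eq_map] at this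

end Free

/-- **Takahasi's theorem** (algebraic closure form): for a finitely generated
subgroup `H` of a free group and any subgroup `K` containing `H`, there is a unique
subgroup `H'` with `H ≤alg H'` and `H'` a free factor of `K`. -/
theorem takahasi_algebraic_closure {A : Type*} (H K : Subgroup (FreeGroup A))
    (hH : H.FG) (hHK : H ≤ K) :
    ∃! H' : Subgroup (FreeGroup A),
      IsAlgebraicExtension H H' ∧ IsFreeFactor H' K := by
  classical
  have hex := exists_fg_factor H K hH hHK
  obtain ⟨ι, hι, f, hcard, hf, hHf, hfK⟩ := Nat.find_spec hex
  have hP : IsAlgebraicExtension H f.range := by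
    refine ⟨hHf, ?_⟩
    intro L hHL hL
    obtain ⟨α, κ, e, he, hr, hl⟩ := hL.exists_basis
    have eq : FreeGroup (α ⊕ κ) ≃* FreeGroup ι :=
      ((MonoidHom.ofInjective he).trans (MulEquiv.subgroupCongr hr)).trans
        (MonoidHom.ofInjective hf).symm
    have eq' : α ⊕ κ ≃ ι := Equiv.ofFreeGroupEquiv eq
    have hfin : Finite (α ⊕ κ) := Finite.of_equiv _ eq'.symm
    have hα : Finite α := Finite.of_injective (Sum.inl : α → α ⊕ κ) Sum.inl_injective
    have hκ : Finite κ := Finite.of_injective (Sum.inr : κ → α ⊕ κ) Sum.inr_injective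
    have hc : Nat.card α + Nat.card κ = Nat.card ι := by
      rw [← Nat.card_sum, Nat.card_congr eq']
    have hmin : Nat.find hex ≤ Nat.card α := Nat.find_min' hex
      ⟨α, hα, e.comp (FreeGroup.map Sum.inl), rfl,
        he.comp (FreeGroup.map_injective Sum.inl_injective), by rwa [hl],
        by rw [hl]; exact hL.trans hfK⟩
    have hκ0 : Nat.card κ = 0 := by omega
    have hemp : IsEmpty κ := Finite.card_eq_zero_iff.1 hκ0
    rw [← hl, ← hr, MonoidHom.range_comp, MonoidHom.range_eq_top.2, ← MonoidHom.range_eq_map]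
    apply FreeGroup.map_surjective
    rintro (x | x)
    · exact ⟨x, rfl⟩
    · exact hemp.elim x
  refine ⟨f.range, ⟨hP, hfK⟩, ?_⟩
  · have aux : ∀ P Q : Subgroup (FreeGroup A), IsAlgebraicExtension H P → IsFreeFactor P K →
        IsAlgebraicExtension H Q → IsFreeFactor Q K → Q ≤ P := by
      intro P Q hP hPK hQ hQK
      have := hQ.2 (P ⊓ Q) (le_inf hP.1 hQ.1) (hPK.inf hQK.le)
      rw [← this]; exact inf_le_left
    rintro Q ⟨hQ, hQK⟩
    exact le_antisymm (aux _ _ hP hfK hQ hQK) (aux _ _ hQ hQK hP hfK)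
end

section
/- Let H be a finitely generated subgroup of a free group F = FreeGroup A. Then the set AE(H) = {K : Subgroup F | H ≤alg K} of algebraic extensions of H is finite, and every K ∈ AE(H) is finitely generated (Takahasi's theorem). -/
namespace Takahasi

open Monoid

/-- Any labelling of the edges of a Schreier graph extends to a cocycle. -/
theorem exists_cocycle {A X G : Type*} [Group G] [MulAction (FreeGroup A) X]
    (c : X → A → G) :
    ∃ C : FreeGroup A → X → G,
      (∀ g h x, C (g * h) x = C g (h • x) * C h x) ∧ ∀ a x, C (FreeGroup.of a) x = c x a := by
  let e : A → Equiv.Perm (X × G) := fun a =>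
    { toFun := fun z => (FreeGroup.of a • z.1, c z.1 a * z.2)
      invFun := fun z => ((FreeGroup.of a)⁻¹ • z.1, (c ((FreeGroup.of a)⁻¹ • z.1) a)⁻¹ * z.2)
      left_inv := fun z => by simp
      right_inv := fun z => by simp }
  let ρ : FreeGroup A →* Equiv.Perm (X × G) := FreeGroup.lift e
  have key : ∀ g : FreeGroup A, ∀ x h, ρ g (x, h) = (g • x, (ρ g (x, 1)).2 * h) := by
    intro g
    induction g using FreeGroup.induction_on with
    | C1 => intro x h; simp
    | of a => intro x h; simp [ρ, e]
    | inv_of a _ =>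
      intro x h
      rw [map_inv]
      simp only [ρ, FreeGroup.lift_apply_of]
      simp [e, Equiv.Perm.inv_def, Equiv.symm]
    | mul g k hg hk =>
      intro x h
      rw [map_mul, Equiv.Perm.mul_apply, Equiv.Perm.mul_apply, hk x h, hk x 1, hg, hg (k • x) (_ * 1)]
      simp [mul_smul, mul_assoc]
  refine ⟨fun g x => (ρ g (x, 1)).2, ?_, ?_⟩
  · intro g h x
    show (ρ (g * h) (x, 1)).2 = _
    rw [map_mul, Equiv.Perm.mul_apply, key h x 1, key g]
    simp
  · intro a x
    simp [ρ, e]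

section

variable {A : Type*} (K : Subgroup (FreeGroup A)) (P : Set (List (A × Bool)))

/-- Vertices of the finite subgraph. -/
def V : Set (FreeGroup A ⧸ K) := {x | ∃ p ∈ P, x = (FreeGroup.mk p : FreeGroup A ⧸ K)}

/-- Edges of the finite subgraph. -/
def E : Set ((FreeGroup A ⧸ K) × A) :=
  {z | ∃ p ∈ P, ((z.2, true) :: p ∈ P ∧ z.1 = (FreeGroup.mk p : FreeGroup A ⧸ K)) ∨
    ((z.2, false) :: p ∈ P ∧
      z.1 = ((FreeGroup.mk ((z.2, false) :: p) : FreeGroup A) : FreeGroup A ⧸ K))}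

theorem mk_cons (s : A × Bool) (p : List (A × Bool)) :
    FreeGroup.mk (s :: p) = FreeGroup.mk [s] * FreeGroup.mk p := by
  rw [FreeGroup.mul_mk]; rfl

theorem mk_false (a : A) : FreeGroup.mk [(a, false)] = (FreeGroup.of a)⁻¹ := by
  simp [FreeGroup.of, FreeGroup.inv_mk, FreeGroup.invRev]

theorem mk_true (a : A) : FreeGroup.mk [(a, true)] = FreeGroup.of a := rfl

theorem exists_tree (hnil : [] ∈ P) :
    ∃ (t : FreeGroup A ⧸ K → FreeGroup A) (d : FreeGroup A ⧸ K → ℕ),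
      t ((1 : FreeGroup A) : FreeGroup A ⧸ K) = 1 ∧
      (∀ x, (t x : FreeGroup A ⧸ K) = x) ∧
      (∀ x ∈ V K P, ∃ p ∈ P, t x = FreeGroup.mk p) ∧
      (∀ x, x ∉ V K P → ∃ (s : A × Bool) (y : FreeGroup A ⧸ K), d y < d x ∧
        x = FreeGroup.mk [s] • y ∧ t x = FreeGroup.mk [s] * t y) := by
  classical
  have hex : ∀ x : FreeGroup A ⧸ K, ∃ n : ℕ, ∃ w : List (A × Bool),
      w.length = n ∧ FreeGroup.mk w • x ∈ V K P := by
    intro x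
    obtain ⟨g, rfl⟩ := QuotientGroup.mk_surjective x
    refine ⟨_, (g⁻¹).toWord, rfl, [], hnil, ?_⟩
    rw [FreeGroup.mk_toWord, MulAction.Quotient.smul_coe, smul_eq_mul, inv_mul_cancel]
    rfl
  let d : FreeGroup A ⧸ K → ℕ := fun x => Nat.find (hex x)
  have hpar : ∀ x, x ∉ V K P → ∃ (s : A × Bool) (y : FreeGroup A ⧸ K), d y < d x ∧
      x = FreeGroup.mk [s] • y := by
    intro x hx
    obtain ⟨w, hw, hwx⟩ := Nat.find_spec (hex x)
    rcases List.eq_nil_or_concat w with rfl | ⟨w', s, rfl⟩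
    · exact absurd (by simpa [← FreeGroup.one_eq_mk] using hwx) hx
    · refine ⟨(s.1, !s.2), FreeGroup.mk [s] • x, ?_, ?_⟩
      · have h1 : d (FreeGroup.mk [s] • x) ≤ w'.length := by
          apply Nat.find_min'
          refine ⟨w', rfl, ?_⟩
          rw [← mul_smul, FreeGroup.mul_mk]
          simpa using hwx
        have h2 : d x = w'.length + 1 := by
          rw [show d x = _ from hw.symm]; simp
        omega
      · have : FreeGroup.mk [(s.1, !s.2)] = (FreeGroup.mk [s])⁻¹ := by
          simp [FreeGroup.inv_mk, FreeGroup.invRev]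
        rw [this, inv_smul_smul]
  choose s y hd hxy using hpar
  have hu : ∀ x : FreeGroup A ⧸ K, x ∈ V K P → ∃ g : FreeGroup A,
      (∃ p ∈ P, g = FreeGroup.mk p) ∧ (g : FreeGroup A ⧸ K) = x ∧
      (x = ((1 : FreeGroup A) : FreeGroup A ⧸ K) → g = 1) := by
    intro x hx
    by_cases h : x = ((1 : FreeGroup A) : FreeGroup A ⧸ K)
    · exact ⟨1, ⟨[], hnil, rfl⟩, h.symm, fun _ => rfl⟩
    · obtain ⟨p, hp, rfl⟩ := hx
      exact ⟨_, ⟨p, hp, rfl⟩, rfl, fun h' => absurd h' h⟩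
  choose! u hu1 hu2 hu3 using hu
  have hrec : ∃ t : FreeGroup A ⧸ K → FreeGroup A,
      ∀ x, t x = if h : x ∈ V K P then u x else FreeGroup.mk [s x h] * t (y x h) := by
    let F : ∀ x : FreeGroup A ⧸ K, (∀ z, d z < d x → FreeGroup A) → FreeGroup A :=
      fun x r => if h : x ∈ V K P then u x else FreeGroup.mk [s x h] * r (y x h) (hd x h)
    have wf : WellFounded (fun a b : FreeGroup A ⧸ K => d a < d b) :=
      (measure d).wf
    refine ⟨wf.fix F, fun x => ?_⟩
    rw [wf.fix_eq]
  obtain ⟨t, ht⟩ := hrec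
  have h1V : ((1 : FreeGroup A) : FreeGroup A ⧸ K) ∈ V K P := ⟨[], hnil, rfl⟩
  refine ⟨t, d, ?_, ?_, ?_, ?_⟩
  · rw [ht, dif_pos h1V]; exact hu3 _ h1V rfl
  · intro x
    induction h : d x using Nat.strong_induction_on generalizing x with
    | _ n ih =>
      rw [ht]
      split_ifs with hx
      · exact hu2 x hx
      · rw [← smul_eq_mul, ← MulAction.Quotient.smul_coe, ih _ (h ▸ hd x hx) _ rfl]
        exact (hxy x hx).symm
  · intro x hx
    rw [ht, dif_pos hx]; exact hu1 x hx
  · intro x hx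
    refine ⟨s x hx, y x hx, hd x hx, hxy x hx, ?_⟩
    rw [ht, dif_neg hx]

theorem main (hnil : [] ∈ P) (htail : ∀ s p, s :: p ∈ P → p ∈ P) :
    ∃ L : Subgroup (FreeGroup A), IsFreeFactor L K ∧
      (∀ p ∈ P, FreeGroup.mk p ∈ K → FreeGroup.mk p ∈ L) ∧
      L ≤ Subgroup.closure ((K : Set (FreeGroup A)) ∩
        {g | ∃ p ∈ P, ∃ q ∈ P, g = (FreeGroup.mk p)⁻¹ * FreeGroup.mk q}) := by
  classical
  obtain ⟨t, d, t1, tx, tV, tN⟩ := exists_tree K P hnil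
  let x0 : FreeGroup A ⧸ K := ((1 : FreeGroup A) : FreeGroup A ⧸ K)
  have hx0 : ∀ g : FreeGroup A, g • x0 = (g : FreeGroup A ⧸ K) := by
    intro g
    show g • ((1 : FreeGroup A) : FreeGroup A ⧸ K) = _
    rw [MulAction.Quotient.smul_coe, smul_eq_mul, mul_one]
  have hK : ∀ g : FreeGroup A, g ∈ K ↔ g • x0 = x0 := by
    intro g
    rw [hx0, eq_comm, QuotientGroup.eq]; simp
  let b : FreeGroup A ⧸ K → A → FreeGroup A :=
    fun x a => (t (FreeGroup.of a • x))⁻¹ * FreeGroup.of a * t x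
  have tx' : ∀ x, t x • x0 = x := fun x => by rw [hx0, tx]
  have tx'' : ∀ x, (t x)⁻¹ • x = x0 := fun x => by rw [inv_smul_eq_iff, tx']
  have hbK : ∀ x a, b x a ∈ K := by
    intro x a
    rw [hK, mul_smul, mul_smul, tx', tx'']
  let L := Subgroup.closure {g | ∃ x a, (x, a) ∈ E K P ∧ g = b x a}
  let M := Subgroup.closure {g | ∃ x a, (x, a) ∉ E K P ∧ g = b x a}
  have hLK : L ≤ K := by
    rw [Subgroup.closure_le]; rintro _ ⟨x, a, _, rfl⟩; exact hbK x a
  have hMK : M ≤ K := by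
    rw [Subgroup.closure_le]; rintro _ ⟨x, a, _, rfl⟩; exact hbK x a
  have hbL : ∀ x a, (x, a) ∈ E K P → b x a ∈ L :=
    fun x a h => Subgroup.subset_closure ⟨x, a, h, rfl⟩
  have hbM : ∀ x a, (x, a) ∉ E K P → b x a ∈ M :=
    fun x a h => Subgroup.subset_closure ⟨x, a, h, rfl⟩
  let c : FreeGroup A ⧸ K → A → Coprod L M := fun x a =>
    if h : (x, a) ∈ E K P then Coprod.inl ⟨b x a, hbL x a h⟩ else Coprod.inr ⟨b x a, hbM x a h⟩
  obtain ⟨C, Cmul, Cof⟩ := exists_cocycle c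
  have C1 : ∀ x, C 1 x = 1 := by
    intro x
    have := Cmul 1 1 x
    simpa using this
  have Cinv : ∀ g x, C g⁻¹ x = (C g (g⁻¹ • x))⁻¹ := by
    intro g x
    have := Cmul g g⁻¹ x
    rw [mul_inv_cancel, C1] at this
    exact (inv_eq_of_mul_eq_one_right this.symm).symm
  -- evaluation of the cocycle
  have Cev : ∀ g x, (Coprod.lift L.subtype M.subtype) (C g x) = (t (g • x))⁻¹ * g * t x := by
    intro g
    induction g using FreeGroup.induction_on with
    | C1 => intro x; simp [C1]
    | of a =>
      intro x
      rw [Cof]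
      by_cases h : (x, a) ∈ E K P <;> simp [c, h, b]
    | inv_of a ih =>
      intro x
      rw [Cinv, map_inv, ih, smul_inv_smul]
      group
    | mul g k hg hk =>
      intro x
      rw [Cmul, map_mul, hg, hk, mul_smul]
      group
  -- telescoping along paths in the subgraph
  have tele : ∀ p ∈ P, ∃ l : L, C (FreeGroup.mk p) x0 = Coprod.inl l := by
    intro p
    induction p with
    | nil => intro _; exact ⟨1, by rw [← FreeGroup.one_eq_mk, C1, map_one]⟩
    | cons s p ih =>
      intro hp
      obtain ⟨l, hl⟩ := ih (htail _ _ hp)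
      rw [mk_cons, Cmul, hl]
      obtain ⟨a, _ | _⟩ := s
      · rw [mk_false, Cinv, Cof]
        have hE : ((FreeGroup.of a)⁻¹ • FreeGroup.mk p • x0, a) ∈ E K P := by
          refine ⟨p, htail _ _ hp, Or.inr ⟨hp, ?_⟩⟩
          show _ = ((FreeGroup.mk ((a, false) :: p) : FreeGroup A) : FreeGroup A ⧸ K)
          rw [mk_cons, mk_false, ← hx0, mul_smul]
        refine ⟨⟨_, hbL _ _ hE⟩⁻¹ * l, ?_⟩
        simp only [c, dif_pos hE, map_mul, map_inv]
      · rw [mk_true, Cof]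
        have hE : (FreeGroup.mk p • x0, a) ∈ E K P :=
          ⟨p, htail _ _ hp, Or.inl ⟨hp, hx0 _⟩⟩
        refine ⟨⟨_, hbL _ _ hE⟩ * l, ?_⟩
        simp only [c, dif_pos hE, map_mul]
  have tele' : ∀ p ∈ P, ∃ l : L, C (FreeGroup.mk p) x0 = Coprod.inl l ∧
      (l : FreeGroup A) = (t (FreeGroup.mk p • x0))⁻¹ * FreeGroup.mk p := by
    intro p hp
    obtain ⟨l, hl⟩ := tele p hp
    refine ⟨l, hl, ?_⟩
    have := Cev (FreeGroup.mk p) x0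
    rw [hl, show t x0 = 1 from t1, mul_one] at this
    simpa using this
  -- trivial on the tree
  have Ct : ∀ x, C (t x) x0 = 1 := by
    intro x
    induction h : d x using Nat.strong_induction_on generalizing x with
    | _ n ih =>
      by_cases hx : x ∈ V K P
      · obtain ⟨p, hp, hpt⟩ := tV x hx
        obtain ⟨l, hl, hl'⟩ := tele' p hp
        rw [← hpt, tx', inv_mul_cancel] at hl'
        rw [hpt, hl, show l = 1 from Subtype.ext hl', map_one]
      · obtain ⟨s, y, hdy, hxy, hty⟩ := tN x hx
        rw [hty, Cmul, ih _ (h ▸ hdy) y rfl, mul_one, tx']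
        have h1 := Cev (FreeGroup.mk [s]) y
        rw [← hxy, hty] at h1
        have h1 : (Coprod.lift L.subtype M.subtype) (C (FreeGroup.mk [s]) y) = 1 := by
          rw [h1]; group
        have hc : ∀ z a, (Coprod.lift L.subtype M.subtype) (c z a) = 1 → c z a = 1 := by
          intro z a hz
          by_cases hE : (z, a) ∈ E K P
          · simp only [c, dif_pos hE, Coprod.lift_apply_inl] at hz ⊢
            rw [show (⟨b z a, hbL z a hE⟩ : L) = 1 from Subtype.ext hz, map_one]
          · simp only [c, dif_neg hE, Coprod.lift_apply_inr] at hz ⊢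
            rw [show (⟨b z a, hbM z a hE⟩ : M) = 1 from Subtype.ext hz, map_one]
        obtain ⟨a, _ | _⟩ := s
        · rw [mk_false, Cinv, Cof] at h1 ⊢
          rw [map_inv, inv_eq_one] at h1
          rw [hc _ _ h1, inv_one]
        · rw [mk_true, Cof] at h1 ⊢
          exact hc _ _ h1
  have Cb : ∀ x a, C (b x a) x0 = c x a := by
    intro x a
    simp only [b]
    rw [Cmul, Cmul, Ct, mul_one, tx', Cinv, tx'', Ct, Cof, inv_one, one_mul]
  let φ : K →* Coprod L M := MonoidHom.mk' (fun k => C k x0) (by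
    intro k k'
    show C (k * k') x0 = _
    rw [Cmul, (hK k').1 k'.2])
  refine ⟨L, ⟨hLK, M, hMK, ?_⟩, ?_, ?_⟩
  · have hφL : φ.comp (Subgroup.inclusion hLK) = Coprod.inl := by
      ext ⟨g, hg⟩
      show C g x0 = Coprod.inl ⟨g, hg⟩
      induction hg using Subgroup.closure_induction with
      | mem g hg =>
        obtain ⟨x, a, h, rfl⟩ := hg
        rw [Cb]; simp only [c, dif_pos h]
      | one => rw [C1]; exact (map_one _).symm
      | mul g k hg hk ihg ihk =>
        rw [Cmul, (hK k).1 (hLK hk), ihg, ihk, ← map_mul]; rfl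
      | inv g hg ih =>
        rw [Cinv, (hK _).1 (inv_mem (hLK hg)), ih, ← map_inv]; rfl
    have hφM : φ.comp (Subgroup.inclusion hMK) = Coprod.inr := by
      ext ⟨g, hg⟩
      show C g x0 = Coprod.inr ⟨g, hg⟩
      induction hg using Subgroup.closure_induction with
      | mem g hg =>
        obtain ⟨x, a, h, rfl⟩ := hg
        rw [Cb]; simp only [c, dif_neg h]
      | one => rw [C1]; exact (map_one _).symm
      | mul g k hg hk ihg ihk =>
        rw [Cmul, (hK k).1 (hMK hk), ihg, ihk, ← map_mul]; rfl
      | inv g hg ih =>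
        rw [Cinv, (hK _).1 (inv_mem (hMK hg)), ih, ← map_inv]; rfl
    refine Function.bijective_iff_has_inverse.2 ⟨φ, ?_, ?_⟩
    · intro z
      have : φ.comp (Coprod.lift (Subgroup.inclusion hLK) (Subgroup.inclusion hMK)) =
          MonoidHom.id _ := by
        apply Coprod.hom_ext
        · rw [MonoidHom.comp_assoc, Coprod.lift_comp_inl, hφL]; rfl
        · rw [MonoidHom.comp_assoc, Coprod.lift_comp_inr, hφM]; rfl
      exact DFunLike.congr_fun this z
    · intro k
      apply Subtype.ext
      have h2 : K.subtype.comp (Coprod.lift (Subgroup.inclusion hLK) (Subgroup.inclusion hMK)) =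
          Coprod.lift L.subtype M.subtype := by
        apply Coprod.hom_ext
        · rw [MonoidHom.comp_assoc, Coprod.lift_comp_inl, Coprod.lift_comp_inl]; rfl
        · rw [MonoidHom.comp_assoc, Coprod.lift_comp_inr, Coprod.lift_comp_inr]; rfl
      have h3 := DFunLike.congr_fun h2 (φ k)
      have h4 := Cev k x0
      rw [(hK k).1 k.2, show t x0 = 1 from t1, inv_one, one_mul, mul_one] at h4
      exact h3.trans h4
  · intro p hp hpK
    obtain ⟨l, _, hl⟩ := tele' p hp
    rw [(hK _).1 hpK, show t x0 = 1 from t1, inv_one, one_mul] at hl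
    rw [← hl]; exact l.2
  · -- generators
    have gen : ∀ p ∈ P, ∀ x, FreeGroup.mk p • x0 = x →
        (t x)⁻¹ * FreeGroup.mk p ∈ Subgroup.closure ((K : Set (FreeGroup A)) ∩
        {g | ∃ p ∈ P, ∃ q ∈ P, g = (FreeGroup.mk p)⁻¹ * FreeGroup.mk q}) := by
      intro p hp x hx
      apply Subgroup.subset_closure
      refine ⟨?_, ?_⟩
      · show _ ∈ K
        rw [hK, mul_smul, hx, tx'']
      · obtain ⟨q, hq, hqt⟩ := tV x ⟨p, hp, by rw [← hx, hx0]⟩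
        exact ⟨q, hq, p, hp, by rw [hqt]⟩
    rw [Subgroup.closure_le]
    rintro _ ⟨x, a, ⟨p, hp, ⟨hap, hx⟩ | ⟨hap, hx⟩⟩, rfl⟩
    · simp only at hap hx
      have h1 := gen p hp x (by rw [hx0, hx])
      have h2 := gen _ hap (FreeGroup.of a • x) (by rw [mk_cons, mk_true, mul_smul, hx0, hx])
      have h3 := mul_mem h2 (inv_mem h1)
      rw [mk_cons, mk_true] at h3
      rw [SetLike.mem_coe]
      convert h3 using 1
      simp only [b]; group
    · simp only at hap hx
      have h1 := gen _ hap x (by rw [hx0, hx])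
      have h2 := gen p hp (FreeGroup.of a • x) (by
        rw [hx, ← hx0, mk_cons, mk_false, mul_smul, smul_inv_smul])
      have h3 := mul_mem h2 (inv_mem h1)
      rw [mk_cons, mk_false] at h3
      rw [SetLike.mem_coe]
      convert h3 using 1
      simp only [b]; group

end

end Takahasi

theorem takahasi_algebraic_extensions_finite {A : Type*}
    (H : Subgroup (FreeGroup A)) (hH : H.FG) :
    {K : Subgroup (FreeGroup A) | IsAlgebraicExtension H K}.Finite ∧
      ∀ K : Subgroup (FreeGroup A), IsAlgebraicExtension H K → K.FG := by
  classical
  obtain ⟨S, hS⟩ := hH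
  let P : Set (List (A × Bool)) := {[]} ∪ ⋃ g ∈ S, {p | p ∈ g.toWord.tails}
  have hPfin : P.Finite := by
    refine (Set.finite_singleton _).union (S.finite_toSet.biUnion fun g _ => ?_)
    exact List.finite_toSet _
  have hnil : [] ∈ P := Or.inl rfl
  have htail : ∀ s p, s :: p ∈ P → p ∈ P := by
    intro s p h
    rcases h with h | h
    · exact absurd h (by simp)
    · right
      simp only [Set.mem_iUnion, Set.mem_ofPred_eq, List.mem_tails] at h ⊢
      obtain ⟨g, hg, h⟩ := h
      exact ⟨g, hg, (List.suffix_cons s p).trans h⟩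
  have hSP : ∀ g ∈ S, g.toWord ∈ P := by
    intro g hg
    right
    simp only [Set.mem_iUnion, Set.mem_ofPred_eq, List.mem_tails]
    exact ⟨g, hg, List.suffix_rfl⟩
  let Q : Set (FreeGroup A) := {g | ∃ p ∈ P, ∃ q ∈ P, g = (FreeGroup.mk p)⁻¹ * FreeGroup.mk q}
  have hQ : Q.Finite := by
    refine ((hPfin.prod hPfin).image
      (fun z => (FreeGroup.mk z.1)⁻¹ * FreeGroup.mk z.2)).subset ?_
    rintro _ ⟨p, hp, q, hq, rfl⟩
    exact ⟨(p, q), ⟨hp, hq⟩, rfl⟩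
  have key : ∀ K : Subgroup (FreeGroup A), IsAlgebraicExtension H K →
      K = Subgroup.closure ((K : Set (FreeGroup A)) ∩ Q) := by
    rintro K ⟨hHK, hK⟩
    obtain ⟨L, hL, hPL, hLQ⟩ := Takahasi.main K P hnil htail
    have hHL : H ≤ L := by
      rw [← hS, Subgroup.closure_le]
      intro g hg
      have h1 := hPL _ (hSP g hg)
      rw [FreeGroup.mk_toWord] at h1
      exact h1 (hHK (hS ▸ Subgroup.subset_closure hg))
    have hLK := hK L hHL hL
    apply le_antisymm
    · rw [hLK] at hLQ; exact hLQ
    · rw [Subgroup.closure_le]; exact Set.inter_subset_left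
  refine ⟨?_, ?_⟩
  · refine (hQ.finite_subsets.image Subgroup.closure).subset ?_
    intro K hK
    exact ⟨_, Set.inter_subset_right, (key K hK).symm⟩
  · intro K hK
    rw [key K hK, Subgroup.fg_iff]
    exact ⟨_, rfl, hQ.subset Set.inter_subset_right⟩
end
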